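/- For the one-group shrinkage prior with a > 0, fix any c > 2 and any ρ > c, and let ζ_τ = √(2 log(1/τ^{2a})). Then there exists a function ε : (0,1) → ℝ with ε(τ) → 0 as τ → 0 such that for every θ ∈ ℝ and every sufficiently small τ ∈ (0,1), E_θ (T_τ(X) − X)² ≤ ρ² ζ_τ² (1 + ε(τ)), where X ~ N(θ,1) and E_θ denotes expectation under N(θ,1); in particular the bound holds uniformly in θ. -/

import Mathlib

open MeasureTheory Filter Set

noncomputable section

namespace OneGroup

/-- A one-group (global-local) shrinkage prior: the local variance `λ²` has density
`π(λ²) = K (λ²)^{-a-1} L(λ²)` on `(0,∞)`, where `L` is a positive, measurable,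
non-constant slowly varying function, bounded above by `M`, and bounded below by
`c₀` on `[t₀, ∞)`. -/
structure Prior where
  K : ℝ
  a : ℝ
  L : ℝ → ℝ
  M : ℝ
  c₀ : ℝ
  t₀ : ℝ
  K_pos : 0 < K
  a_pos : 0 < a
  L_pos : ∀ t : ℝ, 0 < t → 0 < L t
  L_meas : Measurable L
  L_slow : ∀ c : ℝ, 0 < c → Tendsto (fun t => L (c * t) / L t) atTop (nhds 1)
  L_nonconst : ∃ s : ℝ, 0 < s ∧ ∃ t : ℝ, 0 < t ∧ L s ≠ L t
  M_pos : 0 < M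
  L_le : ∀ t : ℝ, 0 < t → L t ≤ M
  c₀_pos : 0 < c₀
  t₀_pos : 0 < t₀
  L_ge : ∀ t : ℝ, t₀ ≤ t → c₀ ≤ L t

/-- The (unnormalized) posterior weight, as a function of `t = λ²`, entering all
posterior expectations of functions of the shrinkage coefficient `κ = 1/(1+tτ²)`. -/
def wt (P : Prior) (x τ t : ℝ) : ℝ :=
  (1 + t * τ ^ 2) ^ (-(1:ℝ)/2) * t ^ (-P.a - 1) * P.L t *
    Real.exp (-x ^ 2 / (2 * (1 + t * τ ^ 2)))

/-- Posterior expectation `E(g(κ) | x, τ)` of a function `g` of the shrinkage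
coefficient `κ = 1/(1+λ²τ²)`. -/
def postExp (P : Prior) (g : ℝ → ℝ) (x τ : ℝ) : ℝ :=
  (∫ t in Ioi (0:ℝ), g (1 / (1 + t * τ ^ 2)) * wt P x τ t) /
    (∫ t in Ioi (0:ℝ), wt P x τ t)

/-- The posterior mean `T_τ(x) = x (1 - E(κ | x, τ))`. -/
def T (P : Prior) (τ x : ℝ) : ℝ := x * (1 - postExp P (fun κ => κ) x τ)

/-- The marginal prior density `p_τ(θ)` of `θ`. -/
def pdens (P : Prior) (τ θ : ℝ) : ℝ :=
  ∫ u in Ioi (0:ℝ),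
    (Real.sqrt (2 * Real.pi * u * τ ^ 2))⁻¹ * Real.exp (-θ ^ 2 / (2 * u * τ ^ 2)) *
      (P.K * u ^ (-P.a - 1) * P.L u)

/-- The unnormalized posterior density of `θ` given an observation `x ~ N(θ,1)`. -/
def postw (P : Prior) (τ x θ : ℝ) : ℝ := Real.exp (-(x - θ) ^ 2 / 2) * pdens P τ θ

/-- The `k`-th posterior moment of `θ` given `x`. -/
def postMoment (P : Prior) (τ x : ℝ) (k : ℕ) : ℝ :=
  (∫ θ : ℝ, θ ^ k * postw P τ x θ) / (∫ θ : ℝ, postw P τ x θ)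

/-- The posterior variance `Var(θ | x)`. -/
def postVar (P : Prior) (τ x : ℝ) : ℝ := postMoment P τ x 2 - (postMoment P τ x 1) ^ 2

/-- The standard normal density. -/
def gauss (z : ℝ) : ℝ := (Real.sqrt (2 * Real.pi))⁻¹ * Real.exp (-z ^ 2 / 2)

/-- Expectation of `f(X)` for `X ~ N(θ, 1)`. -/
def E1 (θ : ℝ) (f : ℝ → ℝ) : ℝ := ∫ x : ℝ, f x * gauss (x - θ)

/-- Expectation of `f(X)` for `X ~ N_n(θ, I_n)`. -/
def EN (n : ℕ) (θ : Fin n → ℝ) (f : (Fin n → ℝ) → ℝ) : ℝ :=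
  ∫ x : Fin n → ℝ, f x * ∏ i, gauss (x i - θ i)

/-- The posterior probability `Π(A | x)` of a set `A ⊆ ℝⁿ` given data `x`,
for the coordinatewise-independent posterior. -/
def postProb (P : Prior) (τ : ℝ) {n : ℕ} (x : Fin n → ℝ) (A : Set (Fin n → ℝ)) : ℝ :=
  (∫ θ in A, ∏ i, postw P τ (x i) (θ i)) /
    (∫ θ : Fin n → ℝ, ∏ i, postw P τ (x i) (θ i))

/-- The set `l₀[p]` of nearly black vectors in `ℝⁿ`. -/
def nearlyBlack (n p : ℕ) : Set (Fin n → ℝ) :=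
  {θ | (Finset.univ.filter fun i => θ i ≠ 0).card ≤ p}

end OneGroup

open OneGroup

/-!
The error of the posterior mean is `|T_τ(x) - x| = |x| E(κ | x, τ)`, and up to a factor `1 + o(1)`
it is at most `ζ_τ`, uniformly in `x`; integrating the square of this pointwise bound against
`N(θ, 1)` gives the theorem. For `|x| ≤ ζ_τ` the bound is `E(κ | x, τ) ≤ 1`. For `x > ζ_τ`, split
the posterior at `κ = s` with `s = r ζ_τ / x`, `r > 1`: the part `κ ≤ s` contributes at most
`x s = r ζ_τ`. The part `κ > s` has mass at most of order `exp (-s x² / 2)` before normalization,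
whereas the normalizing integral is at least of order
`τ^{2a} x^{-2a-1} = exp (-ζ_τ² / 2) x^{-2a-1}`,
as one sees from `t ≈ x² / τ²`. Since `s x² - ζ_τ² ≥ (r - 1) x`, this second part is exponentially
small in `x`.
-/

namespace OneGroup

open scoped Topology

/-- The shrinkage coefficient `κ = 1 / (1 + λ²τ²)` as a function of the local variance `t = λ²`. -/
def shrinkCoeff (τ t : ℝ) : ℝ := 1 / (1 + t * τ ^ 2)

lemma shrinkCoeff_pos (τ : ℝ) {t : ℝ} (ht : 0 ≤ t) : 0 < shrinkCoeff τ t := by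
  unfold shrinkCoeff; positivity

lemma shrinkCoeff_antitoneOn (τ : ℝ) : AntitoneOn (shrinkCoeff τ) (Ici 0) := by
  intro t (ht : 0 ≤ t) u _ htu
  unfold shrinkCoeff
  gcongr

lemma shrinkCoeff_le_one (τ : ℝ) {t : ℝ} (ht : 0 ≤ t) : shrinkCoeff τ t ≤ 1 := by
  simpa [shrinkCoeff] using shrinkCoeff_antitoneOn τ self_mem_Ici ht ht

lemma continuousOn_shrinkCoeff (τ : ℝ) : ContinuousOn (shrinkCoeff τ) (Ici 0) := by
  refine continuousOn_const.div (by fun_prop) fun t (ht : 0 ≤ t) => ?_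
  positivity

/-- The density at `x` of `N(0, 1 + tτ²)`, the law of an observation given the local variance
`t = λ²`, without its factor `1 / √(2π)`. -/
def marginalLik (x τ t : ℝ) : ℝ :=
  √(shrinkCoeff τ t) * Real.exp (-(shrinkCoeff τ t * x ^ 2) / 2)

lemma marginalLik_pos (x τ : ℝ) {t : ℝ} (ht : 0 ≤ t) : 0 < marginalLik x τ t :=
  mul_pos (Real.sqrt_pos.2 (shrinkCoeff_pos τ ht)) (Real.exp_pos _)

lemma marginalLik_le_exp (x τ : ℝ) {t : ℝ} (ht : 0 ≤ t) :
    marginalLik x τ t ≤ Real.exp (-(shrinkCoeff τ t * x ^ 2) / 2) :=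
  mul_le_of_le_one_left (Real.exp_pos _).le (Real.sqrt_le_one.2 (shrinkCoeff_le_one τ ht))

lemma marginalLik_le_one (x τ : ℝ) {t : ℝ} (ht : 0 ≤ t) : marginalLik x τ t ≤ 1 := by
  refine (marginalLik_le_exp x τ ht).trans (Real.exp_le_one_iff.2 ?_)
  have := shrinkCoeff_pos τ ht
  rw [neg_div, neg_nonpos]
  positivity

lemma continuousOn_marginalLik (x τ : ℝ) : ContinuousOn (marginalLik x τ) (Ici 0) := by
  have := continuousOn_shrinkCoeff τ
  unfold marginalLik
  fun_prop

/-- The prior density of the local variance `t = λ²`, without its normalizing constant `K`. -/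
def priorWeight (P : Prior) (t : ℝ) : ℝ := t ^ (-P.a - 1) * P.L t

lemma priorWeight_nonneg (P : Prior) {t : ℝ} (ht : 0 < t) : 0 ≤ priorWeight P t :=
  mul_nonneg (Real.rpow_nonneg ht.le _) (P.L_pos t ht).le

lemma measurable_priorWeight (P : Prior) : Measurable (priorWeight P) := by
  have := P.L_meas
  unfold priorWeight
  fun_prop

lemma integrableOn_priorWeight_Ioi_one (P : Prior) : IntegrableOn (priorWeight P) (Ioi 1) := by
  have hdom : IntegrableOn (fun t : ℝ => t ^ (-P.a - 1) * P.M) (Ioi 1) :=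
    (integrableOn_Ioi_rpow_of_lt (by linarith [P.a_pos]) one_pos).mul_const _
  refine hdom.mono' (measurable_priorWeight P).aestronglyMeasurable ?_
  refine ae_restrict_of_forall_mem measurableSet_Ioi fun t ht => ?_
  have ht0 : 0 < t := one_pos.trans ht
  rw [Real.norm_of_nonneg (priorWeight_nonneg P ht0)]
  exact mul_le_mul_of_nonneg_left (P.L_le t ht0) (Real.rpow_nonneg ht0.le _)

lemma wt_eq_marginalLik_mul (P : Prior) (x τ : ℝ) {t : ℝ} (ht : 0 ≤ t) :
    wt P x τ t = marginalLik x τ t * priorWeight P t := by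
  have hpow : (1 + t * τ ^ 2) ^ (-(1 : ℝ) / 2) = √(shrinkCoeff τ t) := by
    rw [Real.sqrt_eq_rpow, shrinkCoeff, one_div, Real.inv_rpow (by positivity),
      ← Real.rpow_neg (by positivity), neg_div]
  have hexp : -x ^ 2 / (2 * (1 + t * τ ^ 2)) = -(shrinkCoeff τ t * x ^ 2) / 2 := by
    unfold shrinkCoeff; field_simp
  rw [wt, hpow, hexp, marginalLik, priorWeight]
  ring

lemma wt_nonneg (P : Prior) (x τ : ℝ) {t : ℝ} (ht : 0 < t) : 0 ≤ wt P x τ t := by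
  rw [wt_eq_marginalLik_mul P x τ ht.le]
  exact mul_nonneg (marginalLik_pos x τ ht.le).le (priorWeight_nonneg P ht)

lemma shrinkCoeff_mul_wt_nonneg (P : Prior) (x τ : ℝ) {t : ℝ} (ht : 0 < t) :
    0 ≤ shrinkCoeff τ t * wt P x τ t :=
  mul_nonneg (shrinkCoeff_pos τ ht.le).le (wt_nonneg P x τ ht)

lemma measurable_wt (P : Prior) (x τ : ℝ) : Measurable (wt P x τ) := by
  have := P.L_meas
  unfold wt
  fun_prop

lemma integral_wt_nonneg (P : Prior) (x τ : ℝ) : 0 ≤ ∫ t in Ioi 0, wt P x τ t :=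
  setIntegral_nonneg measurableSet_Ioi fun _ ht => wt_nonneg P x τ ht

lemma integrableOn_wt_iff (P : Prior) (x τ : ℝ) :
    IntegrableOn (wt P x τ) (Ioi 0) ↔ IntegrableOn (priorWeight P) (Ioi 0) := by
  constructor <;> intro h
  · have hIcc : IntegrableOn (wt P x τ) (Icc 0 1) :=
      (integrableOn_Icc_iff_integrableOn_Ioc (by finiteness)).2 (h.mono_set Ioc_subset_Ioi_self)
    have hcont : ContinuousOn (fun t => (marginalLik x τ t)⁻¹) (Icc 0 1) :=
      ((continuousOn_marginalLik x τ).mono Icc_subset_Ici_self).inv₀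
        fun t ht => (marginalLik_pos x τ ht.1).ne'
    have hprior : IntegrableOn (priorWeight P) (Icc 0 1) := by
      refine (hIcc.continuousOn_mul hcont isCompact_Icc).congr_fun (fun t ht => ?_)
        measurableSet_Icc
      simp only [wt_eq_marginalLik_mul P x τ ht.1]
      exact inv_mul_cancel_left₀ (marginalLik_pos x τ ht.1).ne' _
    rw [← Ioc_union_Ioi_eq_Ioi (zero_le_one' ℝ)]
    exact (hprior.mono_set Ioc_subset_Icc_self).union (integrableOn_priorWeight_Ioi_one P)
  · refine h.mono' (measurable_wt P x τ).aestronglyMeasurable ?_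
    refine ae_restrict_of_forall_mem measurableSet_Ioi fun t (ht : 0 < t) => ?_
    rw [Real.norm_of_nonneg (wt_nonneg P x τ ht), wt_eq_marginalLik_mul P x τ ht.le]
    exact mul_le_of_le_one_left (priorWeight_nonneg P ht) (marginalLik_le_one x τ ht.le)

/-- The posterior mean `E(κ | x, τ)` of the shrinkage coefficient. -/
def postShrink (P : Prior) (x τ : ℝ) : ℝ := postExp P (fun κ => κ) x τ

lemma postShrink_eq_div (P : Prior) (x τ : ℝ) :
    postShrink P x τ =
      (∫ t in Ioi 0, shrinkCoeff τ t * wt P x τ t) / ∫ t in Ioi 0, wt P x τ t := rfl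

lemma postShrink_nonneg (P : Prior) (x τ : ℝ) : 0 ≤ postShrink P x τ :=
  div_nonneg
    (setIntegral_nonneg measurableSet_Ioi fun _ ht => shrinkCoeff_mul_wt_nonneg P x τ ht)
    (integral_wt_nonneg P x τ)

lemma postShrink_eq_zero_of_not_integrableOn (P : Prior) (x τ : ℝ)
    (hP : ¬ IntegrableOn (priorWeight P) (Ioi 0)) : postShrink P x τ = 0 := by
  -- The normalizing integral diverges: it has the junk value `0`, and so has the quotient by it.
  rw [postShrink_eq_div, integral_undef (mt (integrableOn_wt_iff P x τ).1 hP), div_zero]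

lemma shrinkCoeff_mul_wt_le (P : Prior) (x τ : ℝ) {s t : ℝ} (hs : 0 ≤ s) (ht : 0 < t) :
    shrinkCoeff τ t * wt P x τ t ≤
      s * wt P x τ t + Real.exp (-(s * x ^ 2) / 2) * priorWeight P t := by
  have hwt := wt_nonneg P x τ ht
  have hprior := priorWeight_nonneg P ht
  rcases le_total (shrinkCoeff τ t) s with hκ | hκ
  · exact le_add_of_le_of_nonneg (by gcongr) (by positivity)
  · calc shrinkCoeff τ t * wt P x τ t
        ≤ wt P x τ t := mul_le_of_le_one_left hwt (shrinkCoeff_le_one τ ht.le)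
      _ ≤ Real.exp (-(shrinkCoeff τ t * x ^ 2) / 2) * priorWeight P t := by
          rw [wt_eq_marginalLik_mul P x τ ht.le]
          gcongr
          exact marginalLik_le_exp x τ ht.le
      _ ≤ Real.exp (-(s * x ^ 2) / 2) * priorWeight P t := by gcongr
      _ ≤ s * wt P x τ t + Real.exp (-(s * x ^ 2) / 2) * priorWeight P t :=
          le_add_of_nonneg_left (by positivity)

lemma postShrink_le_add {P : Prior} {x τ s δ : ℝ} (hP : IntegrableOn (priorWeight P) (Ioi 0))
    (hs : 0 ≤ s) (hδ : 0 ≤ δ)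
    (htail : Real.exp (-(s * x ^ 2) / 2) * ∫ t in Ioi 0, priorWeight P t ≤
      δ * ∫ t in Ioi 0, wt P x τ t) :
    postShrink P x τ ≤ s + δ := by
  have hwt : IntegrableOn (wt P x τ) (Ioi 0) := (integrableOn_wt_iff P x τ).2 hP
  refine div_le_of_le_mul₀ (integral_wt_nonneg P x τ) (add_nonneg hs hδ) ?_
  calc ∫ t in Ioi 0, shrinkCoeff τ t * wt P x τ t
      ≤ ∫ t in Ioi 0, (s * wt P x τ t + Real.exp (-(s * x ^ 2) / 2) * priorWeight P t) := by
        refine integral_mono_of_nonneg ?_ ((hwt.const_mul _).add (hP.const_mul _)) ?_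
        · exact ae_restrict_of_forall_mem measurableSet_Ioi fun t ht =>
            shrinkCoeff_mul_wt_nonneg P x τ ht
        · exact ae_restrict_of_forall_mem measurableSet_Ioi fun t ht =>
            shrinkCoeff_mul_wt_le P x τ hs ht
    _ = s * (∫ t in Ioi 0, wt P x τ t) +
          Real.exp (-(s * x ^ 2) / 2) * ∫ t in Ioi 0, priorWeight P t := by
        rw [integral_add (hwt.const_mul _) (hP.const_mul _), integral_const_mul,
          integral_const_mul]
    _ ≤ (s + δ) * ∫ t in Ioi 0, wt P x τ t := by
        rw [add_mul]
        gcongr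

lemma postShrink_le_one (P : Prior) (x τ : ℝ) : postShrink P x τ ≤ 1 := by
  by_cases hP : IntegrableOn (priorWeight P) (Ioi 0)
  · refine div_le_one_of_le₀ (integral_mono_of_nonneg ?_ ((integrableOn_wt_iff P x τ).2 hP) ?_)
      (integral_wt_nonneg P x τ)
    · exact ae_restrict_of_forall_mem measurableSet_Ioi fun t ht =>
        shrinkCoeff_mul_wt_nonneg P x τ ht
    · exact ae_restrict_of_forall_mem measurableSet_Ioi fun t ht =>
        mul_le_of_le_one_left (wt_nonneg P x τ ht) (shrinkCoeff_le_one τ (le_of_lt ht))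
  · rw [postShrink_eq_zero_of_not_integrableOn P x τ hP]
    exact zero_le_one

lemma postShrink_abs (P : Prior) (x τ : ℝ) : postShrink P |x| τ = postShrink P x τ := by
  simp only [postShrink, postExp, wt, sq_abs]

lemma abs_T_sub_self (P : Prior) (x τ : ℝ) : |T P τ x - x| = |x| * postShrink P |x| τ := by
  have herr : T P τ x - x = -(x * postShrink P x τ) := by
    rw [T, postShrink]
    ring
  rw [herr, abs_neg, abs_mul, abs_of_nonneg (postShrink_nonneg P x τ), postShrink_abs]

lemma le_wt_of_mem_Ioc (P : Prior) (x τ : ℝ) {A t : ℝ} (hA : P.t₀ ≤ A) (ht : t ∈ Ioc A (2 * A)) :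
    √(shrinkCoeff τ (2 * A)) * Real.exp (-(shrinkCoeff τ A * x ^ 2) / 2) *
      ((2 * A) ^ (-P.a - 1) * P.c₀) ≤ wt P x τ t := by
  have hA0 : 0 < A := P.t₀_pos.trans_le hA
  have ht0 : 0 < t := hA0.trans ht.1
  have hc := P.c₀_pos
  have hpow : (2 * A) ^ (-P.a - 1) ≤ t ^ (-P.a - 1) :=
    Real.rpow_le_rpow_of_nonpos ht0 ht.2 (by linarith [P.a_pos])
  rw [wt_eq_marginalLik_mul P x τ ht0.le, marginalLik, priorWeight]
  gcongr
  · exact shrinkCoeff_antitoneOn τ ht0.le (ht0.le.trans ht.2) ht.2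
  · exact shrinkCoeff_antitoneOn τ hA0.le ht0.le ht.1.le
  · exact P.L_ge t (hA.trans ht.1.le)

lemma le_integral_wt {P : Prior} {A : ℝ} (x τ : ℝ) (hP : IntegrableOn (priorWeight P) (Ioi 0))
    (hA : P.t₀ ≤ A) :
    √(shrinkCoeff τ (2 * A)) * Real.exp (-(shrinkCoeff τ A * x ^ 2) / 2) *
      ((2 * A) ^ (-P.a - 1) * P.c₀) * A ≤ ∫ t in Ioi 0, wt P x τ t := by
  have hA0 : 0 < A := P.t₀_pos.trans_le hA
  have hwt : IntegrableOn (wt P x τ) (Ioi 0) := (integrableOn_wt_iff P x τ).2 hP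
  have hsub : Ioc A (2 * A) ⊆ Ioi 0 := fun t ht => hA0.trans ht.1
  have hvol : volume.real (Ioc A (2 * A)) = A := by
    rw [Real.volume_real_Ioc_of_le (by linarith)]
    ring
  have hIoc := setIntegral_ge_of_const_le_real measurableSet_Ioc measure_Ioc_lt_top.ne
    (fun t ht => le_wt_of_mem_Ioc P x τ hA ht) (hwt.mono_set hsub)
  rw [hvol] at hIoc
  exact hIoc.trans (setIntegral_mono_set hwt
    (ae_restrict_of_forall_mem measurableSet_Ioi fun t ht => wt_nonneg P x τ ht)
    hsub.eventuallyLE)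

/-- The constant `C` in the lower bound `C τ^{2a} x^{-2a-1}` for the normalizing integral of the
posterior; its factors come from `κ ≥ 1 / (3x²)`, `t ≤ 2x² / τ²`, `L ≥ c₀` and `κ x² ≤ 1` for
`t` between `x² / τ²` and `2x² / τ²`. -/
def normalizerConst (P : Prior) : ℝ :=
  (√3)⁻¹ * 2 ^ (-P.a - 1) * P.c₀ * Real.exp (-1 / 2)

lemma normalizerConst_pos (P : Prior) : 0 < normalizerConst P := by
  have := P.c₀_pos
  unfold normalizerConst
  positivity

lemma inv_sqrt_three_mul_inv_le_sqrt_shrinkCoeff {x τ t : ℝ} (hx : 1 ≤ x)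
    (ht : t * τ ^ 2 = 2 * x ^ 2) : (√3)⁻¹ * x⁻¹ ≤ √(shrinkCoeff τ t) := by
  apply Real.le_sqrt_of_sq_le
  rw [mul_pow, inv_pow, inv_pow, Real.sq_sqrt (by norm_num), ← mul_inv, shrinkCoeff, one_div, ht]
  gcongr
  nlinarith

lemma shrinkCoeff_mul_sq_le_one {x τ t : ℝ} (ht : t * τ ^ 2 = x ^ 2) :
    shrinkCoeff τ t * x ^ 2 ≤ 1 := by
  rw [shrinkCoeff, ht, one_div_mul_eq_div, div_le_one (by positivity)]
  linarith

lemma two_mul_sq_div_sq_rpow_mul (a : ℝ) {x τ : ℝ} (hx : 0 < x) (hτ : 0 < τ) :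
    (2 * (x ^ 2 / τ ^ 2)) ^ (-a - 1) * (x ^ 2 / τ ^ 2) =
      2 ^ (-a - 1) * (τ ^ (2 * a) * x ^ (-(2 * a))) := by
  have hpow : (x ^ 2 / τ ^ 2) ^ (-a) = τ ^ (2 * a) * x ^ (-(2 * a)) := by
    rw [Real.div_rpow (sq_nonneg x) (sq_nonneg τ), ← Real.rpow_natCast_mul hx.le,
      ← Real.rpow_natCast_mul hτ.le, div_eq_mul_inv, ← Real.rpow_neg hτ.le, mul_comm,
      Nat.cast_ofNat, mul_neg, neg_neg]
  have hA : 0 < x ^ 2 / τ ^ 2 := by positivity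
  rw [Real.mul_rpow two_pos.le hA.le, mul_assoc, ← Real.rpow_add_one hA.ne', sub_add_cancel, hpow]

lemma normalizerConst_mul_le_integral_wt {P : Prior} {x τ : ℝ}
    (hP : IntegrableOn (priorWeight P) (Ioi 0)) (hτ : 0 < τ) (hx : 1 ≤ x)
    (hxτ : P.t₀ ≤ x ^ 2 / τ ^ 2) :
    normalizerConst P * τ ^ (2 * P.a) * x ^ (-(2 * P.a + 1)) ≤ ∫ t in Ioi 0, wt P x τ t := by
  have hx0 : 0 < x := one_pos.trans_le hx
  have hc := P.c₀_pos
  have hpow := two_mul_sq_div_sq_rpow_mul P.a hx0 hτ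
  have hxpow : x ^ (-(2 * P.a + 1)) = x⁻¹ * x ^ (-(2 * P.a)) := by
    rw [neg_add, Real.rpow_add hx0, Real.rpow_neg_one, mul_comm]
  refine le_trans ?_ (le_integral_wt x τ hP hxτ)
  set A := x ^ 2 / τ ^ 2
  have hAτ : A * τ ^ 2 = x ^ 2 := div_mul_cancel₀ _ (by positivity)
  calc normalizerConst P * τ ^ (2 * P.a) * x ^ (-(2 * P.a + 1))
      = (√3)⁻¹ * x⁻¹ * Real.exp (-1 / 2) * ((2 * A) ^ (-P.a - 1) * P.c₀) * A := by
        rw [hxpow, normalizerConst]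
        linear_combination -((√3)⁻¹ * x⁻¹ * Real.exp (-1 / 2) * P.c₀) * hpow
    _ ≤ √(shrinkCoeff τ (2 * A)) * Real.exp (-(shrinkCoeff τ A * x ^ 2) / 2) *
          ((2 * A) ^ (-P.a - 1) * P.c₀) * A := by
        gcongr
        · exact inv_sqrt_three_mul_inv_le_sqrt_shrinkCoeff hx (by rw [mul_assoc, hAτ])
        · exact shrinkCoeff_mul_sq_le_one hAτ

/-- The threshold `ζ_τ = √(2 log (1 / τ^{2a}))`. -/
def zeta (P : Prior) (τ : ℝ) : ℝ := √(2 * Real.log (1 / τ ^ (2 * P.a)))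

lemma zeta_eq_sqrt_log (P : Prior) {τ : ℝ} (hτ : 0 < τ) :
    zeta P τ = √(4 * P.a * -Real.log τ) := by
  rw [zeta, one_div, Real.log_inv, Real.log_rpow hτ]
  ring_nf

lemma zeta_sq (P : Prior) {τ : ℝ} (hτ : τ ∈ Ioo 0 1) :
    zeta P τ ^ 2 = 2 * Real.log (1 / τ ^ (2 * P.a)) := by
  refine Real.sq_sqrt (mul_nonneg two_pos.le (Real.log_nonneg ?_))
  exact (one_le_div (Real.rpow_pos_of_pos hτ.1 _)).2
    (Real.rpow_le_one hτ.1.le hτ.2.le (by linarith [P.a_pos]))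

lemma rpow_two_mul_a_eq_exp (P : Prior) {τ : ℝ} (hτ : τ ∈ Ioo 0 1) :
    τ ^ (2 * P.a) = Real.exp (-zeta P τ ^ 2 / 2) := by
  have hpos : 0 < τ ^ (2 * P.a) := Real.rpow_pos_of_pos hτ.1 _
  rw [zeta_sq P hτ, one_div, Real.log_inv, mul_neg, neg_neg, mul_div_cancel_left₀ _ two_ne_zero,
    Real.exp_log hpos]

lemma tendsto_zeta_atTop (P : Prior) : Tendsto (zeta P) (𝓝[>] 0) atTop := by
  have ha : 0 < 4 * P.a := by linarith [P.a_pos]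
  have hlog : Tendsto (fun τ => √(4 * P.a * -Real.log τ)) (𝓝[>] 0) atTop :=
    Real.tendsto_sqrt_atTop.comp
      ((tendsto_neg_atBot_atTop.comp Real.tendsto_log_nhdsGT_zero).const_mul_atTop ha)
  refine hlog.congr' ?_
  filter_upwards [self_mem_nhdsWithin] with τ hτ using (zeta_eq_sqrt_log P hτ).symm

lemma eventually_mul_rpow_mul_exp_le (I p : ℝ) {b C : ℝ} (hb : 0 < b) (hC : 0 < C) :
    ∀ᶠ x : ℝ in atTop, I * (x ^ p * Real.exp (-b * x)) ≤ C := by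
  have hlim := (tendsto_rpow_mul_exp_neg_mul_atTop_nhds_zero p b hb).const_mul I
  rw [mul_zero] at hlim
  exact hlim.eventually_le_const hC

lemma exp_neg_mul_mul_le {r ζ x : ℝ} (hr : 1 ≤ r) (hζ : 1 ≤ ζ) (hx : ζ ≤ x) :
    Real.exp (-(r * ζ * x) / 2) ≤ Real.exp (-((r - 1) / 2) * x) * Real.exp (-ζ ^ 2 / 2) := by
  rw [← Real.exp_add, Real.exp_le_exp]
  have hζx : ζ ^ 2 ≤ ζ * x := by rw [sq]; gcongr
  have hrx : (r - 1) * x ≤ (r - 1) * (ζ * x) :=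
    mul_le_mul_of_nonneg_left (le_mul_of_one_le_left (by linarith) hζ) (sub_nonneg.2 hr)
  linarith

lemma exp_mul_integral_priorWeight_le {P : Prior} {x τ r : ℝ}
    (hP : IntegrableOn (priorWeight P) (Ioi 0)) (hr : 1 ≤ r) (hτ : τ ∈ Ioo 0 1)
    (hζ : 1 ≤ zeta P τ) (hx : zeta P τ ≤ x) (hxt₀ : P.t₀ ≤ x)
    (hgrowth : (∫ t in Ioi 0, priorWeight P t) *
      (x ^ (2 * P.a + 2) * Real.exp (-((r - 1) / 2) * x)) ≤ (r - 1) * normalizerConst P) :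
    Real.exp (-(r * zeta P τ * x) / 2) * (∫ t in Ioi 0, priorWeight P t) * x ≤
      (r - 1) * ∫ t in Ioi 0, wt P x τ t := by
  set ζ := zeta P τ with hζ_def
  set I := ∫ t in Ioi 0, priorWeight P t
  have hI : 0 ≤ I := setIntegral_nonneg measurableSet_Ioi fun _ ht => priorWeight_nonneg P ht
  have hx1 : 1 ≤ x := hζ.trans hx
  have hx0 : 0 < x := one_pos.trans_le hx1
  have hxτ : P.t₀ ≤ x ^ 2 / τ ^ 2 := by
    rw [le_div_iff₀ (pow_pos hτ.1 2)]
    nlinarith [P.t₀_pos, pow_le_one₀ (n := 2) hτ.1.le hτ.2.le]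
  have hnorm := normalizerConst_mul_le_integral_wt hP hτ.1 hx1 hxτ
  rw [rpow_two_mul_a_eq_exp P hτ, ← hζ_def] at hnorm
  have hxpow : x ^ (2 * P.a + 2) * x ^ (-(2 * P.a + 1)) = x := by
    rw [← Real.rpow_add hx0, show 2 * P.a + 2 + -(2 * P.a + 1) = 1 by ring, Real.rpow_one]
  calc Real.exp (-(r * ζ * x) / 2) * I * x
      ≤ Real.exp (-((r - 1) / 2) * x) * Real.exp (-ζ ^ 2 / 2) * I * x := by
        gcongr
        exact exp_neg_mul_mul_le hr hζ hx
    _ = I * (x ^ (2 * P.a + 2) * Real.exp (-((r - 1) / 2) * x)) *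
          (Real.exp (-ζ ^ 2 / 2) * x ^ (-(2 * P.a + 1))) := by
        nth_rewrite 2 [← hxpow]
        ring
    _ ≤ (r - 1) * normalizerConst P * (Real.exp (-ζ ^ 2 / 2) * x ^ (-(2 * P.a + 1))) := by
        gcongr
    _ ≤ (r - 1) * ∫ t in Ioi 0, wt P x τ t := by
        rw [mul_assoc, ← mul_assoc (normalizerConst P)]
        exact mul_le_mul_of_nonneg_left hnorm (sub_nonneg.2 hr)

lemma mul_postShrink_le_add {P : Prior} {x τ r : ℝ}
    (hP : IntegrableOn (priorWeight P) (Ioi 0)) (hr : 1 ≤ r) (hx : 0 < x)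
    (htail : Real.exp (-(r * zeta P τ * x) / 2) * (∫ t in Ioi 0, priorWeight P t) * x ≤
      (r - 1) * ∫ t in Ioi 0, wt P x τ t) :
    x * postShrink P x τ ≤ r * zeta P τ + (r - 1) := by
  have hζ : 0 ≤ zeta P τ := Real.sqrt_nonneg _
  have hcut : r * zeta P τ / x * x ^ 2 = r * zeta P τ * x := by field_simp
  have hbound : postShrink P x τ ≤ r * zeta P τ / x + (r - 1) / x := by
    refine postShrink_le_add hP (by positivity) (div_nonneg (sub_nonneg.2 hr) hx.le) ?_
    rwa [hcut, div_mul_eq_mul_div (r - 1), le_div_iff₀ hx]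
  rwa [← add_div, le_div_iff₀ hx, mul_comm] at hbound

theorem eventually_abs_T_sub_self_le (P : Prior) {ρ : ℝ} (hρ : 1 < ρ) :
    ∀ᶠ τ in 𝓝[>] 0, ∀ x, |T P τ x - x| ≤ ρ * zeta P τ := by
  by_cases hP : IntegrableOn (priorWeight P) (Ioi 0)
  · set r := (1 + ρ) / 2 with hr_def
    have hr : 1 < r := by linarith
    filter_upwards [Ioo_mem_nhdsGT one_pos, (tendsto_zeta_atTop P).eventually_ge_atTop 1,
      (tendsto_zeta_atTop P).eventually_ge_atTop P.t₀,
      (tendsto_zeta_atTop P).eventually_forall_ge_atTop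
        (eventually_mul_rpow_mul_exp_le (∫ t in Ioi 0, priorWeight P t) (2 * P.a + 2)
          (half_pos (sub_pos.2 hr)) (mul_pos (sub_pos.2 hr) (normalizerConst_pos P)))]
      with τ hτ hζ hζt₀ hgrowth x
    rw [abs_T_sub_self]
    rcases le_total |x| (zeta P τ) with hx | hx
    · calc |x| * postShrink P |x| τ
          ≤ |x| := mul_le_of_le_one_right (abs_nonneg x) (postShrink_le_one P |x| τ)
        _ ≤ ρ * zeta P τ := by nlinarith
    · calc |x| * postShrink P |x| τ
          ≤ r * zeta P τ + (r - 1) :=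
            mul_postShrink_le_add hP hr.le (by linarith)
              (exp_mul_integral_priorWeight_le hP hr.le hτ hζ hx (hζt₀.trans hx) (hgrowth |x| hx))
        _ ≤ ρ * zeta P τ := by nlinarith
  · refine Eventually.of_forall fun τ x => ?_
    rw [abs_T_sub_self, postShrink_eq_zero_of_not_integrableOn P _ τ hP, mul_zero]
    exact mul_nonneg (by linarith) (Real.sqrt_nonneg _)

lemma E1_eq_integral_gaussianReal (θ : ℝ) (f : ℝ → ℝ) :
    E1 θ f = ∫ x, f x ∂ProbabilityTheory.gaussianReal θ 1 := by
  rw [ProbabilityTheory.integral_gaussianReal_eq_integral_smul one_ne_zero, E1]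
  simp [gauss, ProbabilityTheory.gaussianPDFReal, mul_comm]

lemma E1_le_of_le {B : ℝ} {f : ℝ → ℝ} (θ : ℝ) (hf : ∀ x, 0 ≤ f x) (hfB : ∀ x, f x ≤ B) :
    E1 θ f ≤ B := by
  rw [E1_eq_integral_gaussianReal]
  simpa using integral_mono_of_nonneg (μ := ProbabilityTheory.gaussianReal θ 1)
    (ae_of_all _ hf) (integrable_const B) (ae_of_all _ hfB)

end OneGroup

theorem expected_squared_shrinkage_bound_general (P : Prior) (ρ : ℝ) (hρ : 1 < ρ) :
    ∀ᶠ τ in nhdsWithin 0 (Ioi 0), ∀ θ : ℝ, E1 θ (fun x => (T P τ x - x) ^ 2) ≤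
      ρ ^ 2 * (2 * Real.log (1 / τ ^ (2 * P.a))) := by
  filter_upwards [Ioo_mem_nhdsGT one_pos, eventually_abs_T_sub_self_le P hρ] with τ hτ herr θ
  rw [← zeta_sq P hτ, ← mul_pow]
  exact E1_le_of_le θ (fun _ => sq_nonneg _) fun x => sq_le_sq.2 ((herr x).trans (le_abs_self _))

/-- equation (A.14): uniformly in the true mean `θ`,
`E_θ(T_τ(X) - X)² ≤ ρ² ζ_τ² (1 + o(1))` as `τ → 0`, where
`ζ_τ² = 2 log(1/τ^{2a})`, for any fixed `ρ > c > 2`. -/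
theorem expected_squared_shrinkage_bound (P : Prior) (c ρ : ℝ) (hc : 2 < c) (hρ : c < ρ) :
    ∃ ε : ℝ → ℝ, Tendsto ε (nhdsWithin 0 (Ioi 0)) (nhds 0) ∧
      ∃ τ₁ > (0:ℝ), ∀ τ ∈ Ioo (0:ℝ) 1, τ < τ₁ →
        ∀ θ : ℝ, E1 θ (fun x => (T P τ x - x) ^ 2) ≤
          ρ ^ 2 * (2 * Real.log (1 / τ ^ (2 * P.a))) * (1 + ε τ) := by
  obtain ⟨τ₁, hτ₁, hbound⟩ := mem_nhdsGT_iff_exists_Ioo_subset.1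
    (expected_squared_shrinkage_bound_general P ρ (by linarith))
  exact ⟨fun _ => 0, tendsto_const_nhds, τ₁, hτ₁, fun τ hτ hlt θ => by
    simpa only [add_zero, mul_one] using hbound ⟨hτ.1, hlt⟩ θ⟩
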